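/- Let r be an odd prime with r ≠ 5 and let V be the deleted permutation module over ZMod r with the action of X = Equiv.Perm (Fin 5). Define the ZMod r-linear endomorphism θ of V by (θ f)(j) = 3 * f 0 if j = 0 and (θ f)(j) = −(f 0) − f j if j ≠ 0. Let X act on the endomorphism space End(V) by conjugation: g • φ = ρ(g) ∘ φ ∘ ρ(g)⁻¹, where ρ(g) denotes the action of g on V. Then the ZMod r-linear span of the X-orbit of θ in End(V) has dimension 4 and is X-equivariantly isomorphic to V. -/

import Mathlib

/-- The deleted permutation module: functions `Fin 5 → ZMod r` summing to zero. -/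
def V (r : ℕ) : Submodule (ZMod r) (Fin 5 → ZMod r) where
  carrier := {f | ∑ i, f i = 0}
  add_mem' := by
    intro a b ha hb
    simp only [Set.mem_setOf_eq, Pi.add_apply, Finset.sum_add_distrib] at *
    rw [ha, hb, add_zero]
  zero_mem' := by simp
  smul_mem' := by
    intro c f hf
    simp only [Set.mem_setOf_eq, Pi.smul_apply, smul_eq_mul, ← Finset.mul_sum] at *
    rw [hf, mul_zero]

/-- The permutation action of `Equiv.Perm (Fin 5)` on `V r`, given by `σ • f = f ∘ σ⁻¹`. -/
def rho (r : ℕ) : Representation (ZMod r) (Equiv.Perm (Fin 5)) (V r) where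
  toFun σ :=
    { toFun := fun f => ⟨fun i => (f : Fin 5 → ZMod r) (σ⁻¹ i),
        (Equiv.sum_comp σ⁻¹ (f : Fin 5 → ZMod r)).trans f.2⟩
      map_add' := fun _ _ => rfl
      map_smul' := fun _ _ => rfl }
  map_one' := rfl
  map_mul' := fun _ _ => rfl

/-- The endomorphism `θ` of `V`: `(θ f) 0 = 3 * f 0` and `(θ f) j = - f 0 - f j`
for `j ≠ 0`. -/
def theta (r : ℕ) : V r →ₗ[ZMod r] V r where
  toFun f := ⟨fun j => if j = 0 then 3 * (f : Fin 5 → ZMod r) 0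
      else -(f : Fin 5 → ZMod r) 0 - (f : Fin 5 → ZMod r) j, by
    have hf : ∑ i, (f : Fin 5 → ZMod r) i = 0 := f.2
    show ∑ j : Fin 5, (if j = 0 then 3 * (f : Fin 5 → ZMod r) 0
      else -(f : Fin 5 → ZMod r) 0 - (f : Fin 5 → ZMod r) j) = 0
    rw [Fin.sum_univ_five] at hf ⊢
    simp only [show ((0:Fin 5) = 0) = True by simp, show ((1:Fin 5) = 0) = False by decide,
      show ((2:Fin 5) = 0) = False by decide, show ((3:Fin 5) = 0) = False by decide,
      show ((4:Fin 5) = 0) = False by decide, if_true, if_false]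
    linear_combination -hf⟩
  map_add' := by
    intro f g
    ext j
    by_cases h : j = 0 <;> simp [h] <;> ring
  map_smul' := by
    intro c f
    ext j
    by_cases h : j = 0 <;> simp [h] <;> ring

/-- The span of the orbit of `θ` under the conjugation action of `Sym(5)` on `End(V)`. -/
def thetaOrbitSpan (r : ℕ) : Submodule (ZMod r) (V r →ₗ[ZMod r] V r) :=
  Submodule.span (ZMod r)
    (Set.range fun σ : Equiv.Perm (Fin 5) => rho r σ ∘ₗ theta r ∘ₗ rho r σ⁻¹)

/-- The map sending `a` to the endomorphism `f ↦ 5 a f - ⟨a, f⟩`. -/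
def PhiMap (r : ℕ) : V r →ₗ[ZMod r] (V r →ₗ[ZMod r] V r) :=
  LinearMap.mk₂ (ZMod r)
    (fun a f => ⟨fun j => 5 * (a.1 j * f.1 j) - ∑ k, a.1 k * f.1 k, by
      show ∑ j : Fin 5, (5 * (a.1 j * f.1 j) - ∑ k, a.1 k * f.1 k) = 0
      simp only [Fin.sum_univ_five]
      ring⟩)
    (by intro a b f; ext j; simp [Fin.sum_univ_five]; ring)
    (by intro c a f; ext j; simp [Fin.sum_univ_five]; ring)
    (by intro a f g; ext j; simp [Fin.sum_univ_five]; ring)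
    (by intro c a f; ext j; simp [Fin.sum_univ_five]; ring)

lemma PhiMap_apply (r : ℕ) (a f : V r) (j : Fin 5) :
    (PhiMap r a f).1 j = 5 * (a.1 j * f.1 j) - ∑ k, a.1 k * f.1 k := rfl

lemma rho_apply (r : ℕ) (g : Equiv.Perm (Fin 5)) (f : V r) (j : Fin 5) :
    (rho r g f).1 j = f.1 (g⁻¹ j) := rfl

lemma PhiMap_equivariant (r : ℕ) (g : Equiv.Perm (Fin 5)) (a : V r) :
    rho r g ∘ₗ PhiMap r a ∘ₗ rho r g⁻¹ = PhiMap r (rho r g a) := by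
  apply LinearMap.ext
  intro f
  apply Subtype.ext
  funext j
  simp only [LinearMap.comp_apply, rho_apply, PhiMap_apply, inv_inv]
  have h := Equiv.sum_comp g⁻¹ (fun k => a.1 k * f.1 (g k))
  have hg : ∀ k, g (g⁻¹ k) = k := fun k => Equiv.apply_symm_apply g k
  simp only [hg] at h ⊢
  rw [h]

/-- The difference of two coordinate vectors. -/
def dvec (r : ℕ) (i j : Fin 5) : V r :=
  ⟨Pi.single i 1 - Pi.single j 1, by
    show ∑ k, (Pi.single i 1 - Pi.single j 1 : Fin 5 → ZMod r) k = 0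
    simp⟩

lemma five_unit (r : ℕ) (hr : r.Prime) (hr5 : r ≠ 5) : ∃ c : ZMod r, 5 * c = 1 := by
  haveI := Fact.mk hr
  refine ⟨5⁻¹, mul_inv_cancel₀ ?_⟩
  intro h
  have h2 : ((5 : ℕ) : ZMod r) = 0 := by exact_mod_cast h
  rw [ZMod.natCast_eq_zero_iff] at h2
  exact hr5 ((Nat.prime_dvd_prime_iff_eq hr (by norm_num)).1 h2)

lemma PhiMap_injective (r : ℕ) (hr : r.Prime) (hr5 : r ≠ 5) :
    Function.Injective (PhiMap r) := by
  obtain ⟨c, hc⟩ := five_unit r hr hr5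
  rw [injective_iff_map_eq_zero]
  intro a ha
  have key : ∀ i j l : Fin 5, i ≠ j → l ≠ i → l ≠ j → a.1 i = 0 := by
    intro i j l hij hli hlj
    have h1 : (PhiMap r a (dvec r i j)).1 i = 0 := by rw [ha]; rfl
    have h2 : (PhiMap r a (dvec r i j)).1 l = 0 := by rw [ha]; rfl
    rw [PhiMap_apply] at h1 h2
    simp [dvec, mul_sub, Finset.sum_sub_distrib, Pi.single_apply, hij, hli, hlj] at h1 h2
    linear_combination (-a.1 i) * hc + c * h1 - c * h2
  apply Subtype.ext
  funext i
  have : ∃ j l : Fin 5, i ≠ j ∧ l ≠ i ∧ l ≠ j := by revert i; decide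
  obtain ⟨j, l, h1, h2, h3⟩ := this
  exact key i j l h1 h2 h3

lemma range_PhiMap (r : ℕ) (hr : r.Prime) (hr5 : r ≠ 5) :
    LinearMap.range (PhiMap r) = thetaOrbitSpan r := by
  obtain ⟨c, hc⟩ := five_unit r hr hr5
  let w : V r := ⟨fun j => (if j = 0 then 1 else 0) - c, by
    show ∑ j : Fin 5, ((if j = 0 then 1 else 0) - c) = 0
    simp
    linear_combination -hc⟩
  have hwv : ∀ j, w.1 j = (if j = 0 then 1 else 0) - c := fun _ => rfl
  have hw : PhiMap r w = theta r := by
    apply LinearMap.ext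
    intro f
    apply Subtype.ext
    funext j
    have hf : ∑ i, f.1 i = 0 := f.2
    have ht : (theta r f).1 j = if j = 0 then 3 * f.1 0 else -f.1 0 - f.1 j := rfl
    rw [ht, PhiMap_apply]
    simp only [hwv, sub_mul, Finset.sum_sub_distrib, ← Finset.mul_sum, hf]
    by_cases h : j = 0
    · subst h
      simp
      linear_combination (-f.1 0) * hc
    · simp [h]
      linear_combination (-f.1 j) * hc
  have horb : ∀ σ : Equiv.Perm (Fin 5),
      rho r σ ∘ₗ theta r ∘ₗ rho r σ⁻¹ = PhiMap r (rho r σ w) := by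
    intro σ
    rw [← hw, PhiMap_equivariant]
  apply le_antisymm
  · rintro _ ⟨a, rfl⟩
    have hs : ∑ i, a.1 i = 0 := a.2
    have ha : a = ∑ k, a.1 k • rho r (Equiv.swap 0 k) w := by
      apply Subtype.ext
      funext j
      have h1 : ∀ k : Fin 5, ((Equiv.swap 0 k) j = 0) = (j = k) := by
        intro k
        revert j k
        decide
      simp only [AddSubmonoidClass.coe_finset_sum, Finset.sum_apply, Submodule.coe_smul,
        Pi.smul_apply, rho_apply, hwv, Equiv.swap_inv, h1, smul_eq_mul, mul_sub,
        Finset.sum_sub_distrib, ← Finset.sum_mul, hs]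
      simp
    rw [ha, map_sum]
    refine Submodule.sum_mem _ fun k _ => ?_
    rw [map_smul, ← horb]
    exact Submodule.smul_mem _ _ (Submodule.subset_span ⟨_, rfl⟩)
  · refine Submodule.span_le.2 ?_
    rintro _ ⟨σ, rfl⟩
    exact ⟨_, (horb σ).symm⟩

lemma finrank_V (r : ℕ) (hr : r.Prime) : Module.finrank (ZMod r) (V r) = 4 := by
  haveI := Fact.mk hr
  let s : (Fin 5 → ZMod r) →ₗ[ZMod r] ZMod r := ∑ i, LinearMap.proj i
  have hs : ∀ f, s f = ∑ i, f i := by intro f; simp [s]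
  have hV : V r = LinearMap.ker s := by
    ext f
    rw [LinearMap.mem_ker, hs]
    rfl
  have hsurj : LinearMap.range s = ⊤ := by
    rw [LinearMap.range_eq_top]
    intro x
    exact ⟨Pi.single 0 x, by rw [hs]; simp⟩
  have h := LinearMap.finrank_range_add_finrank_ker s
  rw [hsurj, finrank_top, ← hV] at h
  simp at h
  omega

/-- Lemma 2.3 (Astill–Parker–Waldecker): for an odd prime `r ≠ 5`, the span of the
`Sym(5)`-orbit of `θ` in `End(V)` (with the conjugation action) is `4`-dimensional and
is `Sym(5)`-equivariantly isomorphic to `V`. -/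
theorem theta_orbit_span_dim_four_iso_V
    (r : ℕ) (hr : r.Prime) (hodd : Odd r) (hr5 : r ≠ 5) :
    Module.finrank (ZMod r) (thetaOrbitSpan r) = 4 ∧
    ∃ e : thetaOrbitSpan r ≃ₗ[ZMod r] V r,
      ∀ g : Equiv.Perm (Fin 5), ∀ φ ψ : thetaOrbitSpan r,
        (φ : V r →ₗ[ZMod r] V r) = rho r g ∘ₗ (ψ : V r →ₗ[ZMod r] V r) ∘ₗ rho r g⁻¹ →
        e φ = rho r g (e ψ) := by
  let e : V r ≃ₗ[ZMod r] thetaOrbitSpan r :=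
    (LinearEquiv.ofInjective (PhiMap r) (PhiMap_injective r hr hr5)).trans
      (LinearEquiv.ofEq _ _ (range_PhiMap r hr hr5))
  have he : ∀ a, ((e a : thetaOrbitSpan r) : V r →ₗ[ZMod r] V r) = PhiMap r a := fun _ => rfl
  refine ⟨by rw [← e.finrank_eq, finrank_V r hr], e.symm, ?_⟩
  intro g φ ψ h
  rw [LinearEquiv.symm_apply_eq]
  apply Subtype.ext
  rw [he, ← PhiMap_equivariant, ← he, LinearEquiv.apply_symm_apply, h]
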